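/- arXiv:1608.05448 — 2 statements merged into one kernel-verified Lean document; each statement's English description precedes it below -/
import Mathlib

section
/- There is an absolute constant c₁ > 0 such that for every odd prime p and every subset A ⊆ F_p with |A| = δp where δ > c₁ · p^(−1/15), there exist x ∈ A and y ∈ F_p with y ≠ 0 such that x ∈ A, x + y ∈ A, and x + y² ∈ A. -/
open Finset

/-!
Let `q` be the size of the field. Expand the number of configurations `x, x + y, x + y ^ 2` in `A`
into Fourier coefficients. The zero frequency `b` of the third point gives the main term
`|A| ^ 3 / q`. For `b ≠ 0`, completing the square in `y` leaves a Gauss sum of modulus `√q` and the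
phase `ψ (-a ^ 2 / (4 * b))`. After Cauchy–Schwarz in `b`, squaring out over pairs `a`, `a + d`
and writing `c = a + b`, the error becomes, for each `d`, a bilinear form in functions of `a` and
of `c` with kernel `ψ (((a + d) ^ 2 - a ^ 2) / (4 * (c - a)))`.

For `d ≠ 0`, the Möbius substitution `s = (c - a + h) / (c - a)` turns the correlation of the rows
`a` and `a - h` of this kernel into an incomplete Kloosterman sum. No individual bound on such sums
is needed: for fixed `h ≠ 0` they are `∑ₛ ψ (l / s) ψ (m * (s + 1 / s))` up to a unimodular factor,
with `m` running over the field as `a` does, and since `s ↦ s + 1 / s` is at most two-to-one,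
Plancherel bounds their second moment by `2 * q ^ 2`. Hence the form has norm `O(q ^ (3 / 4))`, and
the count exceeds that of the trivial configurations `y = 0` once the density of `A` is above
`3 * q ^ (-1 / 12)`.
-/

section

open ComplexConjugate

section BilinearForm

variable {ι κ 𝕜 : Type*} [RCLike 𝕜]

lemma sq_norm_sum_mul_le (s : Finset ι) (u v : ι → 𝕜) :
    ‖∑ i ∈ s, u i * v i‖ ^ 2 ≤ (∑ i ∈ s, ‖u i‖ ^ 2) * ∑ i ∈ s, ‖v i‖ ^ 2 := by
  have h : ‖∑ i ∈ s, u i * v i‖ ≤ ∑ i ∈ s, ‖u i‖ * ‖v i‖ := by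
    simpa only [norm_mul] using norm_sum_le s fun i ↦ u i * v i
  exact (pow_le_pow_left₀ (norm_nonneg _) h 2).trans (sum_mul_sq_le_sq_mul_sq s _ _)

variable [Fintype ι] [Fintype κ]

lemma sum_sq_norm_sum_mul_eq (u : ι → 𝕜) (M : ι → κ → 𝕜) :
    ((∑ k, ‖∑ i, u i * M i k‖ ^ 2 : ℝ) : 𝕜) =
      ∑ i, ∑ j, u i * conj (u j) * ∑ k, M i k * conj (M j k) := by
  have expand (k : κ) : ((‖∑ i, u i * M i k‖ ^ 2 : ℝ) : 𝕜) =
      ∑ i, ∑ j, u i * conj (u j) * (M i k * conj (M j k)) := by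
    rw [RCLike.ofReal_pow, ← RCLike.mul_conj, map_sum, sum_mul_sum]
    refine sum_congr rfl fun i _ ↦ sum_congr rfl fun j _ ↦ ?_
    rw [map_mul]
    ring
  simp only [map_sum, expand, mul_sum]
  rw [sum_comm]
  exact sum_congr rfl fun i _ ↦ sum_comm

lemma sq_sum_sq_norm_sum_mul_le (u : ι → 𝕜) (M : ι → κ → 𝕜) :
    (∑ k, ‖∑ i, u i * M i k‖ ^ 2) ^ 2 ≤
      (∑ i, ‖u i‖ ^ 2) ^ 2 * ∑ i, ∑ j, ‖∑ k, M i k * conj (M j k)‖ ^ 2 := by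
  have h := sq_norm_sum_mul_le univ (fun x : ι × ι ↦ u x.1 * conj (u x.2))
    fun x ↦ ∑ k, M x.1 k * conj (M x.2 k)
  simp only [Fintype.sum_prod_type, norm_mul, RCLike.norm_conj, mul_pow, ← sum_mul_sum] at h
  rwa [← sum_sq_norm_sum_mul_eq, RCLike.norm_ofReal, sq_abs, ← sq] at h

lemma norm_sum_sum_mul_pow_four_le (u : ι → 𝕜) (M : ι → κ → 𝕜) (v : κ → 𝕜) :
    ‖∑ i, ∑ k, u i * M i k * v k‖ ^ 4 ≤
      (∑ i, ‖u i‖ ^ 2) ^ 2 * (∑ k, ‖v k‖ ^ 2) ^ 2 *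
        ∑ i, ∑ j, ‖∑ k, M i k * conj (M j k)‖ ^ 2 := by
  rw [sum_comm]
  simp only [← sum_mul]
  calc ‖∑ k, (∑ i, u i * M i k) * v k‖ ^ 4
      = (‖∑ k, (∑ i, u i * M i k) * v k‖ ^ 2) ^ 2 := by ring
    _ ≤ ((∑ k, ‖∑ i, u i * M i k‖ ^ 2) * ∑ k, ‖v k‖ ^ 2) ^ 2 := by
        gcongr
        exact sq_norm_sum_mul_le _ _ _
    _ = (∑ k, ‖∑ i, u i * M i k‖ ^ 2) ^ 2 * (∑ k, ‖v k‖ ^ 2) ^ 2 := by ring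
    _ ≤ (∑ i, ‖u i‖ ^ 2) ^ 2 * (∑ i, ∑ j, ‖∑ k, M i k * conj (M j k)‖ ^ 2) *
          (∑ k, ‖v k‖ ^ 2) ^ 2 := by
        gcongr
        exact sq_sum_sq_norm_sum_mul_le _ _
    _ = _ := by ring

end BilinearForm

section Differencing

variable {G 𝕜 : Type*} [AddGroup G] [Fintype G] [RCLike 𝕜]

lemma sum_sum_mul_add {S : Type*} [NonUnitalNonAssocSemiring S] (u v : G → S) :
    ∑ d, ∑ a, u a * v (a + d) = (∑ a, u a) * ∑ a, v a := by
  rw [sum_comm, sum_mul]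
  refine sum_congr rfl fun a _ ↦ ?_
  rw [← mul_sum]
  congr 1
  exact Equiv.sum_comp (Equiv.addLeft a) v

lemma sq_norm_sum_eq_sum_sum_mul_conj_add (w : G → 𝕜) :
    ((‖∑ a, w a‖ ^ 2 : ℝ) : 𝕜) = ∑ d, ∑ a, w a * conj (w (a + d)) := by
  rw [sum_sum_mul_add w fun a ↦ conj (w a), ← map_sum, RCLike.mul_conj, RCLike.ofReal_pow]

lemma sum_sqrt_mul_sqrt_shift_le (u v : G → 𝕜) :
    ∑ d, √(∑ a, ‖u a * conj (u (a + d))‖ ^ 2) * √(∑ a, ‖v a * conj (v (a + d))‖ ^ 2) ≤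
      (∑ a, ‖u a‖ ^ 2) * ∑ a, ‖v a‖ ^ 2 := by
  have total (w : G → 𝕜) : √(∑ d, ∑ a, ‖w a * conj (w (a + d))‖ ^ 2) = ∑ a, ‖w a‖ ^ 2 := by
    simp only [norm_mul, RCLike.norm_conj, mul_pow]
    rw [sum_sum_mul_add (fun a ↦ ‖w a‖ ^ 2) fun a ↦ ‖w a‖ ^ 2, Real.sqrt_mul_self (by positivity)]
  rw [← total u, ← total v]
  exact Real.sum_sqrt_mul_sqrt_le _ (fun _ ↦ by positivity) fun _ ↦ by positivity

end Differencing

section Fourier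

variable {R : Type*} [CommRing R] [Fintype R]

/-- The unnormalised discrete Fourier transform on a finite ring with respect to an additive
character `ψ`, with the sign convention of `ZMod.dft`. -/
noncomputable def charFourier (ψ : AddChar R ℂ) (f : R → ℂ) (a : R) : ℂ :=
  ∑ x, f x * ψ (-(a * x))

lemma charFourier_zero (ψ : AddChar R ℂ) (f : R → ℂ) : charFourier ψ f 0 = ∑ x, f x := by
  simp [charFourier]

variable {ψ : AddChar R ℂ}

lemma card_mul_eq_sum_charFourier_mul (hψ : ψ.IsPrimitive) (f : R → ℂ) (u : R) :
    Fintype.card R * f u = ∑ a, charFourier ψ f a * ψ (a * u) := by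
  classical
  have shift (x a : R) : f x * ψ (-(a * x)) * ψ (a * u) = f x * ψ (a * (u - x)) := by
    rw [mul_assoc, ← AddChar.map_add_eq_mul]
    ring_nf
  simp only [charFourier, sum_mul, shift]
  rw [sum_comm]
  simp [← mul_sum, AddChar.sum_mulShift _ hψ, sub_eq_zero, mul_comm]

lemma sum_sq_norm_charFourier (hψ : ψ.IsPrimitive) (f : R → ℂ) :
    ∑ a, ‖charFourier ψ f a‖ ^ 2 = Fintype.card R * ∑ x, ‖f x‖ ^ 2 := by
  classical
  have orth (x y : R) : ∑ a, ψ (-(a * x)) * conj (ψ (-(a * y))) =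
      if y = x then (Fintype.card R : ℂ) else 0 := by
    simp only [← AddChar.map_neg_eq_conj, neg_neg, ← AddChar.map_add_eq_mul, neg_add_eq_sub,
      ← mul_sub]
    simp [AddChar.sum_mulShift _ hψ, sub_eq_zero]
  have h := sum_sq_norm_sum_mul_eq f fun x a ↦ ψ (-(a * x))
  simp only [orth, mul_ite, mul_zero, sum_ite_eq', mem_univ, if_true, RCLike.mul_conj,
    ← sum_mul] at h
  refine Complex.ofReal_injective (h.trans ?_)
  push_cast
  exact mul_comm _ _

lemma sum_sq_norm_sum_mul_addChar_le {ι : Type*} [DecidableEq R] (hψ : ψ.IsPrimitive)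
    (s : Finset ι) (θ : ι → R) {k : ℕ} (hk : ∀ t, #{i ∈ s | θ i = t} ≤ k) (w : ι → ℂ) :
    ∑ m, ‖∑ i ∈ s, w i * ψ (m * θ i)‖ ^ 2 ≤ Fintype.card R * k * ∑ i ∈ s, ‖w i‖ ^ 2 := by
  set W : R → ℂ := fun t ↦ ∑ i ∈ s with θ i = t, w i
  have fourier_eq (m : R) : charFourier ψ W (-m) = ∑ i ∈ s, w i * ψ (m * θ i) := by
    rw [← sum_fiberwise s θ]
    refine sum_congr rfl fun t _ ↦ ?_
    rw [sum_mul]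
    refine sum_congr rfl fun i hi ↦ ?_
    rw [(mem_filter.1 hi).2, neg_mul, neg_neg]
  have norm_W_le (t : R) : ‖W t‖ ^ 2 ≤ k * ∑ i ∈ s with θ i = t, ‖w i‖ ^ 2 :=
    calc ‖W t‖ ^ 2 ≤ (∑ i ∈ s with θ i = t, ‖w i‖) ^ 2 := by gcongr; exact norm_sum_le _ _
      _ ≤ #{i ∈ s | θ i = t} * ∑ i ∈ s with θ i = t, ‖w i‖ ^ 2 := sq_sum_le_card_mul_sum_sq
      _ ≤ _ := by gcongr; exact hk t
  calc ∑ m, ‖∑ i ∈ s, w i * ψ (m * θ i)‖ ^ 2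
      = ∑ m, ‖charFourier ψ W m‖ ^ 2 := by
        simp only [← fourier_eq]
        exact Equiv.sum_comp (Equiv.neg R) fun m ↦ ‖charFourier ψ W m‖ ^ 2
    _ = Fintype.card R * ∑ t, ‖W t‖ ^ 2 := sum_sq_norm_charFourier hψ W
    _ ≤ Fintype.card R * ∑ t, k * ∑ i ∈ s with θ i = t, ‖w i‖ ^ 2 := by
        gcongr with t
        exact norm_W_le t
    _ = Fintype.card R * k * ∑ i ∈ s, ‖w i‖ ^ 2 := by rw [← mul_sum, sum_fiberwise, mul_assoc]

lemma card_sq_mul_sum_mul_add_mul_add (hψ : ψ.IsPrimitive) (f g h : R → ℂ) (s t : R) :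
    (Fintype.card R : ℂ) ^ 2 * ∑ x, f x * g (x + s) * h (x + t) =
      ∑ b, ∑ a, charFourier ψ h b * charFourier ψ g a * charFourier ψ f (-(a + b)) *
        ψ (a * s + b * t) := by
  have expand (x : R) : (Fintype.card R : ℂ) ^ 2 * (f x * g (x + s) * h (x + t)) =
      ∑ b, ∑ a, charFourier ψ h b * charFourier ψ g a * (f x * ψ (-(-(a + b) * x))) *
        ψ (a * s + b * t) := by
    calc _ = f x * ((Fintype.card R * h (x + t)) * (Fintype.card R * g (x + s))) := by ring
      _ = _ := by
        rw [card_mul_eq_sum_charFourier_mul hψ, card_mul_eq_sum_charFourier_mul hψ, sum_mul_sum,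
          mul_sum]
        refine sum_congr rfl fun b _ ↦ ?_
        rw [mul_sum]
        refine sum_congr rfl fun a _ ↦ ?_
        have : ψ (b * (x + t)) * ψ (a * (x + s)) = ψ (-(-(a + b) * x)) * ψ (a * s + b * t) := by
          rw [← AddChar.map_add_eq_mul, ← AddChar.map_add_eq_mul]
          ring_nf
        linear_combination f x * charFourier ψ h b * charFourier ψ g a * this
  rw [mul_sum, sum_congr rfl fun x _ ↦ expand x, sum_comm]
  refine sum_congr rfl fun b _ ↦ ?_
  rw [sum_comm]
  refine sum_congr rfl fun a _ ↦ ?_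
  simp only [← sum_mul, ← mul_sum, charFourier]

lemma card_sq_mul_sum_sum_mul_add_mul_add {ι : Type*} [Fintype ι] (hψ : ψ.IsPrimitive)
    (f g h : R → ℂ) (σ τ : ι → R) :
    (Fintype.card R : ℂ) ^ 2 * ∑ x, ∑ i, f x * g (x + σ i) * h (x + τ i) =
      ∑ b, ∑ a, charFourier ψ h b * charFourier ψ g a * charFourier ψ f (-(a + b)) *
        ∑ i, ψ (a * σ i + b * τ i) := by
  rw [sum_comm, mul_sum]
  simp only [card_sq_mul_sum_mul_add_mul_add hψ, mul_sum]
  rw [sum_comm]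
  exact sum_congr rfl fun b _ ↦ sum_comm

end Fourier

section Quadratic

lemma card_filter_add_inv_eq_le_two {K : Type*} [Field K] [DecidableEq K] {s : Finset K}
    (hs : 0 ∉ s) (t : K) :
    #{x ∈ s | x + x⁻¹ = t} ≤ 2 := by
  rcases Finset.eq_empty_or_nonempty {x ∈ s | x + x⁻¹ = t} with h | ⟨x, hx⟩
  · simp [h]
  · refine (card_le_card fun y hy ↦ ?_).trans (card_le_two (a := x) (b := x⁻¹))
    obtain ⟨hxs, rfl⟩ := mem_filter.1 hx
    obtain ⟨hys, hyx⟩ := mem_filter.1 hy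
    have hx0 : x ≠ 0 := ne_of_mem_of_not_mem hxs hs
    have hy0 : y ≠ 0 := ne_of_mem_of_not_mem hys hs
    have hmul : (y - x) * (y * x - 1) = 0 := by
      field_simp at hyx
      linear_combination hyx
    rw [mem_insert, mem_singleton]
    exact (mul_eq_zero.1 hmul).imp sub_eq_zero.1
      fun h ↦ eq_inv_of_mul_eq_one_left (sub_eq_zero.1 h)

variable {F : Type*} [Field F] [Fintype F] {ψ : AddChar F ℂ}

lemma sum_addChar_mul_add_mul_sq (h2 : (2 : F) ≠ 0) {b : F} (hb : b ≠ 0) (a : F) :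
    ∑ y, ψ (a * y + b * y ^ 2) = ψ (-(a ^ 2 / (4 * b))) * ∑ y, ψ (b * y ^ 2) := by
  have h4 : (4 : F) ≠ 0 := by simpa [show (4 : F) = 2 ^ 2 by norm_num] using h2
  rw [← Equiv.sum_comp (Equiv.subRight (a / (2 * b))), mul_sum]
  refine sum_congr rfl fun y _ ↦ ?_
  rw [← AddChar.map_add_eq_mul, Equiv.subRight_apply]
  congr 1
  field

lemma sq_norm_sum_addChar_mul_sq (hψ : ψ.IsPrimitive) (h2 : (2 : F) ≠ 0) {b : F} (hb : b ≠ 0) :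
    ‖∑ y, ψ (b * y ^ 2)‖ ^ 2 = Fintype.card F := by
  classical
  have differenced (d : F) : ∑ y, ψ (b * y ^ 2) * conj (ψ (b * (y + d) ^ 2)) =
      if d = 0 then (Fintype.card F : ℂ) else 0 := by
    have phase (y : F) : ψ (b * y ^ 2) * conj (ψ (b * (y + d) ^ 2)) =
        ψ (-(b * d ^ 2)) * ψ (y * (-(2 * b * d))) := by
      rw [← AddChar.map_neg_eq_conj, ← AddChar.map_add_eq_mul, ← AddChar.map_add_eq_mul]
      ring_nf
    simp only [phase, ← mul_sum, AddChar.sum_mulShift _ hψ, neg_eq_zero, mul_eq_zero, h2, hb,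
      false_or]
    split_ifs with hd <;> simp [hd]
  have h := sq_norm_sum_eq_sum_sum_mul_conj_add fun y ↦ ψ (b * y ^ 2)
  simp only [differenced, sum_ite_eq', mem_univ, if_true] at h
  exact Complex.ofReal_injective h

lemma sum_sq_norm_sum_addChar_mul_add_div_le (hψ : ψ.IsPrimitive) {s : Finset F} (hs : 0 ∉ s)
    (l : F) :
    ∑ m, ‖∑ x ∈ s, ψ (m * x + (m + l) / x)‖ ^ 2 ≤ 2 * (Fintype.card F : ℝ) ^ 2 := by
  classical
  have twist (m x : F) : ψ (m * x + (m + l) / x) = ψ (l / x) * ψ (m * (x + x⁻¹)) := by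
    rw [← AddChar.map_add_eq_mul]
    ring_nf
  simp only [twist]
  calc _ ≤ Fintype.card F * (2 : ℕ) * ∑ x ∈ s, ‖ψ (l / x)‖ ^ 2 :=
        sum_sq_norm_sum_mul_addChar_le hψ s _ (card_filter_add_inv_eq_le_two hs) _
    _ = 2 * (Fintype.card F * #s) := by simp; ring
    _ ≤ 2 * (Fintype.card F : ℝ) ^ 2 := by
        rw [sq]
        gcongr
        exact card_le_univ s

variable [DecidableEq F]

lemma norm_sum_addChar_div_sub_div {a b : F} (hab : a ≠ b) (α β : F) :
    ‖∑ c ∈ {a, b}ᶜ, ψ (α / (c - a) - β / (c - b))‖ =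
      ‖∑ s ∈ {0, 1}ᶜ, ψ (α / (a - b) * s + β / (a - b) / s)‖ := by
  have hab' : a - b ≠ 0 := sub_ne_zero.2 hab
  have mobius : ∑ c ∈ {a, b}ᶜ, ψ (α / (c - a) - β / (c - b)) =
      ∑ s ∈ {0, 1}ᶜ, ψ (-((α + β) / (a - b))) * ψ (α / (a - b) * s + β / (a - b) / s) := by
    -- The poles `b`, `a` and the point `∞` go to `0`, `∞` and `1`.
    refine sum_bij' (fun c _ ↦ (c - b) / (c - a)) (fun s _ ↦ a + (a - b) / (s - 1)) ?_ ?_ ?_ ?_ ?_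
    any_goals simp only [mem_compl, mem_insert, mem_singleton]; grind
    · intro c hc
      obtain ⟨ha, hb⟩ : c - a ≠ 0 ∧ c - b ≠ 0 := by simpa [sub_eq_zero] using hc
      rw [← AddChar.map_add_eq_mul]
      congr 1
      field
  rw [mobius, ← mul_sum, norm_mul, AddChar.norm_apply, one_mul]

end Quadratic

section Kernel

variable {F : Type*} [Field F] [DecidableEq F] {ψ : AddChar F ℂ}

/-- The matrix obtained from the quadratic phase `-a ^ 2 / (4 * (c - a))` by multiplicative
differencing with step `d`. The diagonal, where the phase is undefined, is set to `0`. -/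
def differencedKernel (ψ : AddChar F ℂ) (d a c : F) : ℂ :=
  if c = a then 0 else ψ (((a + d) ^ 2 - a ^ 2) / 4 / (c - a))

section Finite

variable [Finite F]

lemma norm_differencedKernel_le_one (d a c : F) : ‖differencedKernel ψ d a c‖ ≤ 1 := by
  unfold differencedKernel
  split_ifs <;> simp

lemma differencedKernel_self_add (d a : F) {b : F} (hb : b ≠ 0) :
    differencedKernel ψ d a (a + b) =
      ψ (-(a ^ 2 / (4 * b))) * conj (ψ (-((a + d) ^ 2 / (4 * b)))) := by
  rw [← AddChar.map_neg_eq_conj, ← AddChar.map_add_eq_mul, differencedKernel,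
    if_neg (by simpa using hb)]
  ring_nf

end Finite

variable [Fintype F]

lemma sum_differencedKernel_mul_conj (d a b : F) :
    ∑ c, differencedKernel ψ d a c * conj (differencedKernel ψ d b c) =
      ∑ c ∈ {a, b}ᶜ, ψ (((a + d) ^ 2 - a ^ 2) / 4 / (c - a) -
        ((b + d) ^ 2 - b ^ 2) / 4 / (c - b)) := by
  rw [← sum_subset (subset_univ {a, b}ᶜ)]
  · refine sum_congr rfl fun c hc ↦ ?_
    obtain ⟨hca, hcb⟩ : c ≠ a ∧ c ≠ b := by simpa using hc
    rw [differencedKernel, differencedKernel, if_neg hca, if_neg hcb, ← AddChar.map_neg_eq_conj,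
      ← AddChar.map_add_eq_mul, ← sub_eq_add_neg]
  · intro c _ hc
    obtain rfl | rfl : c = a ∨ c = b := by simpa [or_iff_not_imp_left] using hc
    all_goals simp [differencedKernel]

lemma norm_sum_differencedKernel_mul_conj_le (d a b : F) :
    ‖∑ c, differencedKernel ψ d a c * conj (differencedKernel ψ d b c)‖ ≤ Fintype.card F := by
  rw [sum_differencedKernel_mul_conj]
  refine (norm_sum_le _ _).trans ?_
  simpa using card_le_univ ({a, b}ᶜ : Finset F)

lemma sum_sq_norm_differencedKernel_sub_le (hψ : ψ.IsPrimitive) (h2 : (2 : F) ≠ 0) {d h : F}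
    (hd : d ≠ 0) (hh : h ≠ 0) :
    ∑ a, ‖∑ c, differencedKernel ψ d a c * conj (differencedKernel ψ d (a - h) c)‖ ^ 2 ≤
      2 * (Fintype.card F : ℝ) ^ 2 := by
  have h4 : (4 : F) ≠ 0 := by simpa [show (4 : F) = 2 ^ 2 by norm_num] using h2
  set m : F → F := fun a ↦ ((a + d) ^ 2 - a ^ 2) / 4 / h
  have m_bijective : Function.Bijective m := by
    refine Function.Injective.bijective_of_finite fun a b hab ↦ ?_
    have : 2 * d * (a - b) = 0 := by
      simp only [m] at hab
      field_simp at hab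
      linear_combination hab
    simpa [h2, hd, sub_eq_zero] using this
  have m_sub (a : F) : ((a - h + d) ^ 2 - (a - h) ^ 2) / 4 / h = m a + -(2 * d) / 4 := by
    simp only [m]
    field
  refine le_of_eq_of_le ?_ (sum_sq_norm_sum_addChar_mul_add_div_le hψ
    (s := {0, 1}ᶜ) (by simp) (-(2 * d) / 4))
  refine Fintype.sum_bijective m m_bijective _ _ fun a ↦ ?_
  rw [sum_differencedKernel_mul_conj,
    norm_sum_addChar_div_sub_div (by simpa [eq_comm (a := a)] using hh), sub_sub_cancel, m_sub]

lemma sum_sum_sq_norm_differencedKernel_le (hψ : ψ.IsPrimitive) (h2 : (2 : F) ≠ 0) {d : F}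
    (hd : d ≠ 0) :
    ∑ a, ∑ b, ‖∑ c, differencedKernel ψ d a c * conj (differencedKernel ψ d b c)‖ ^ 2 ≤
      3 * (Fintype.card F : ℝ) ^ 3 := by
  set q : ℝ := (Fintype.card F : ℝ)
  set N : F → F → ℝ := fun a b ↦
    ‖∑ c, differencedKernel ψ d a c * conj (differencedKernel ψ d b c)‖ ^ 2
  have diagonal : ∑ a, N a (a - 0) ≤ q ^ 3 :=
    calc ∑ a, N a (a - 0) ≤ ∑ _a : F, q ^ 2 := by
          gcongr with a
          exact pow_le_pow_left₀ (norm_nonneg _) (norm_sum_differencedKernel_mul_conj_le _ _ _) 2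
      _ = q ^ 3 := by simp [q]; ring
  have off_diagonal : ∑ h ∈ univ.erase 0, ∑ a, N a (a - h) ≤ 2 * q ^ 3 :=
    calc ∑ h ∈ univ.erase 0, ∑ a, N a (a - h) ≤ ∑ h ∈ univ.erase (0 : F), 2 * q ^ 2 :=
          sum_le_sum fun h hh ↦
            sum_sq_norm_differencedKernel_sub_le hψ h2 hd (ne_of_mem_erase hh)
      _ ≤ ∑ _h : F, 2 * q ^ 2 :=
          sum_le_sum_of_subset_of_nonneg (erase_subset _ _) fun _ _ _ ↦ by positivity
      _ = 2 * q ^ 3 := by simp [q]; ring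
  calc ∑ a, ∑ b, N a b = ∑ a, ∑ h, N a (a - h) :=
        sum_congr rfl fun a _ ↦ (Equiv.sum_comp (Equiv.subLeft a) (N a)).symm
    _ = ∑ a, N a (a - 0) + ∑ h ∈ univ.erase 0, ∑ a, N a (a - h) := by
        rw [sum_comm, add_sum_erase _ (fun h ↦ ∑ a, N a (a - h)) (mem_univ 0)]
    _ ≤ 3 * q ^ 3 := by linarith

lemma norm_sum_sum_mul_differencedKernel_mul_le (hψ : ψ.IsPrimitive) (h2 : (2 : F) ≠ 0) {d : F}
    (hd : d ≠ 0) (u v : F → ℂ) :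
    ‖∑ a, ∑ c, u a * differencedKernel ψ d a c * v c‖ ≤
      2 * (Fintype.card F : ℝ) ^ (3 / 4 : ℝ) * (√(∑ a, ‖u a‖ ^ 2) * √(∑ c, ‖v c‖ ^ 2)) := by
  set q : ℝ := (Fintype.card F : ℝ)
  refine le_of_pow_le_pow_left₀ four_ne_zero (by positivity) ?_
  have sqrt_pow_four (w : F → ℂ) : √(∑ a, ‖w a‖ ^ 2) ^ 4 = (∑ a, ‖w a‖ ^ 2) ^ 2 := by
    rw [pow_mul _ 2 2, Real.sq_sqrt (by positivity)]
  have rpow_pow_four : (q ^ (3 / 4 : ℝ)) ^ 4 = q ^ 3 := by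
    rw [← Real.rpow_mul_natCast (by positivity), ← Real.rpow_natCast]
    norm_num
  calc _ ≤ (∑ a, ‖u a‖ ^ 2) ^ 2 * (∑ c, ‖v c‖ ^ 2) ^ 2 * (3 * q ^ 3) := by
        refine (norm_sum_sum_mul_pow_four_le _ _ _).trans ?_
        gcongr
        exact sum_sum_sq_norm_differencedKernel_le hψ h2 hd
    _ ≤ (∑ a, ‖u a‖ ^ 2) ^ 2 * (∑ c, ‖v c‖ ^ 2) ^ 2 * (2 ^ 4 * q ^ 3) := by
        gcongr
        norm_num
    _ = _ := by
        simp only [mul_pow, sqrt_pow_four, rpow_pow_four]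
        ring

lemma sum_sq_norm_sum_mul_addChar_neg_sq_div_eq (P R : F → ℂ) :
    ((∑ b ∈ univ.erase 0, ‖∑ a, P a * R (a + b) * ψ (-(a ^ 2 / (4 * b)))‖ ^ 2 : ℝ) : ℂ) =
      ∑ d, ∑ a, ∑ c, P a * conj (P (a + d)) * differencedKernel ψ d a c *
        (R c * conj (R (c + d))) := by
  have expand (b : F) : ((‖∑ a, P a * R (a + b) * ψ (-(a ^ 2 / (4 * b)))‖ ^ 2 : ℝ) : ℂ) = _ :=
    sq_norm_sum_eq_sum_sum_mul_conj_add fun a ↦ P a * R (a + b) * ψ (-(a ^ 2 / (4 * b)))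
  rw [Complex.ofReal_sum, sum_congr rfl fun b _ ↦ expand b, sum_comm]
  refine sum_congr rfl fun d _ ↦ ?_
  rw [sum_comm]
  refine sum_congr rfl fun a _ ↦ ?_
  rw [← Equiv.sum_comp (Equiv.addLeft a), ← add_sum_erase _ _ (mem_univ 0)]
  have diagonal : differencedKernel ψ d a (a + 0) = 0 := by simp [differencedKernel]
  simp only [Equiv.coe_addLeft, diagonal, mul_zero, zero_mul, zero_add]
  refine sum_congr rfl fun b hb ↦ ?_
  rw [differencedKernel_self_add d a (ne_of_mem_erase hb), map_mul, map_mul, add_right_comm a d b]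
  ring

lemma norm_sum_sum_mul_differencedKernel_mul_le_sum_mul_sum (d : F) (u v : F → ℂ) :
    ‖∑ a, ∑ c, u a * differencedKernel ψ d a c * v c‖ ≤ (∑ a, ‖u a‖) * ∑ c, ‖v c‖ := by
  rw [sum_mul_sum]
  refine (norm_sum_le _ _).trans (sum_le_sum fun a _ ↦ (norm_sum_le _ _).trans
    (sum_le_sum fun c _ ↦ ?_))
  rw [norm_mul, norm_mul]
  gcongr
  exact mul_le_of_le_one_right (norm_nonneg _) (norm_differencedKernel_le_one d a c)

lemma sum_sq_norm_sum_mul_addChar_neg_sq_div_le (hψ : ψ.IsPrimitive) (h2 : (2 : F) ≠ 0)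
    (P R : F → ℂ) :
    ∑ b ∈ univ.erase 0, ‖∑ a, P a * R (a + b) * ψ (-(a ^ 2 / (4 * b)))‖ ^ 2 ≤
      3 * (Fintype.card F : ℝ) ^ (3 / 4 : ℝ) * ((∑ a, ‖P a‖ ^ 2) * ∑ c, ‖R c‖ ^ 2) := by
  set B : ℝ := (Fintype.card F : ℝ) ^ (3 / 4 : ℝ)
  have one_le_B : 1 ≤ B :=
    Real.one_le_rpow (by exact_mod_cast Fintype.card_pos) (by norm_num)
  set L : ℝ := (∑ a, ‖P a‖ ^ 2) * ∑ c, ‖R c‖ ^ 2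
  set X : F → ℂ := fun d ↦ ∑ a, ∑ c, P a * conj (P (a + d)) * differencedKernel ψ d a c *
    (R c * conj (R (c + d)))
  set S : F → ℝ := fun d ↦
    √(∑ a, ‖P a * conj (P (a + d))‖ ^ 2) * √(∑ c, ‖R c * conj (R (c + d))‖ ^ 2)
  have norm_X_zero : ‖X 0‖ ≤ L := by
    simpa only [X, L, add_zero, norm_mul, RCLike.norm_conj, ← sq] using
      norm_sum_sum_mul_differencedKernel_mul_le_sum_mul_sum (ψ := ψ) 0
        (fun a ↦ P a * conj (P (a + 0))) fun c ↦ R c * conj (R (c + 0))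
  have norm_X {d : F} (hd : d ∈ univ.erase 0) : ‖X d‖ ≤ 2 * B * S d :=
    norm_sum_sum_mul_differencedKernel_mul_le hψ h2 (ne_of_mem_erase hd) _ _
  calc ∑ b ∈ univ.erase 0, ‖∑ a, P a * R (a + b) * ψ (-(a ^ 2 / (4 * b)))‖ ^ 2
      = ‖∑ d, X d‖ := by
        rw [← sum_sq_norm_sum_mul_addChar_neg_sq_div_eq, Complex.norm_real,
          Real.norm_of_nonneg (by positivity)]
    _ ≤ ∑ d, ‖X d‖ := norm_sum_le _ _
    _ = ‖X 0‖ + ∑ d ∈ univ.erase 0, ‖X d‖ := (add_sum_erase _ _ (mem_univ 0)).symm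
    _ ≤ L + ∑ d ∈ univ.erase 0, 2 * B * S d :=
        add_le_add norm_X_zero (sum_le_sum fun _ hd ↦ norm_X hd)
    _ ≤ L + ∑ d, 2 * B * S d := by
        gcongr
        exact erase_subset _ _
    _ ≤ L + 2 * B * L := by
        rw [← mul_sum]
        gcongr
        exact sum_sqrt_mul_sqrt_shift_le P R
    _ ≤ 3 * B * L := by
        have : 0 ≤ L := by positivity
        nlinarith

end Kernel

section Counting

variable {F : Type*} [Field F] [Fintype F] {ψ : AddChar F ℂ}

/-- The weighted number of configurations `x, x + y, x + y ^ 2` in `F`. -/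
def quadraticCount (f g h : F → ℂ) : ℂ :=
  ∑ x, ∑ y, f x * g (x + y) * h (x + y ^ 2)

lemma card_mul_quadraticCount_sub [DecidableEq F] (hψ : ψ.IsPrimitive) (h2 : (2 : F) ≠ 0)
    (f g h : F → ℂ) :
    (Fintype.card F : ℂ) * (Fintype.card F * quadraticCount f g h -
        (∑ x, f x) * (∑ x, g x) * ∑ x, h x) =
      ∑ b ∈ univ.erase 0, (charFourier ψ h b * ∑ y, ψ (b * y ^ 2)) *
        ∑ a, charFourier ψ g a * charFourier ψ f (-(a + b)) * ψ (-(a ^ 2 / (4 * b))) := by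
  have zero_frequency : ∑ a, charFourier ψ h 0 * charFourier ψ g a * charFourier ψ f (-(a + 0)) *
      ∑ y, ψ (a * y + 0 * y ^ 2) =
      Fintype.card F * ((∑ x, f x) * (∑ x, g x) * ∑ x, h x) := by
    have orth (a : F) : ∑ y, ψ (a * y + 0 * y ^ 2) = if a = 0 then (Fintype.card F : ℂ) else 0 := by
      simp only [zero_mul, add_zero, mul_comm a]
      exact_mod_cast AddChar.sum_mulShift a hψ
    simp only [orth, mul_ite, mul_zero, sum_ite_eq', mem_univ, if_true, add_zero, neg_zero,
      charFourier_zero]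
    ring
  rw [mul_sub, ← mul_assoc, ← sq, quadraticCount, card_sq_mul_sum_sum_mul_add_mul_add hψ,
    ← zero_frequency, ← add_sum_erase _ _ (mem_univ 0), add_sub_cancel_left]
  refine sum_congr rfl fun b hb ↦ ?_
  rw [mul_sum]
  refine sum_congr rfl fun a _ ↦ ?_
  rw [sum_addChar_mul_add_mul_sq h2 (ne_of_mem_erase hb)]
  ring

theorem sq_norm_quadraticCount_sub_le (hF : ringChar F ≠ 2) (f g h : F → ℂ) :
    ‖Fintype.card F * quadraticCount f g h - (∑ x, f x) * (∑ x, g x) * ∑ x, h x‖ ^ 2 ≤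
      3 * (Fintype.card F : ℝ) ^ (11 / 4 : ℝ) *
        ((∑ x, ‖f x‖ ^ 2) * (∑ x, ‖g x‖ ^ 2) * ∑ x, ‖h x‖ ^ 2) := by
  classical
  set q : ℝ := (Fintype.card F : ℝ)
  have q_pos : 0 < q := Nat.cast_pos.2 Fintype.card_pos
  have h2 : (2 : F) ≠ 0 := Ring.two_ne_zero hF
  obtain ⟨ψ, hψ⟩ : ∃ ψ : AddChar F ℂ, ψ.IsPrimitive :=
    ⟨_, AddChar.FiniteField.primitiveChar_to_Complex_isPrimitive F⟩
  have outer : ∑ b ∈ univ.erase 0, ‖charFourier ψ h b * ∑ y, ψ (b * y ^ 2)‖ ^ 2 ≤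
      q * (q * ∑ x, ‖h x‖ ^ 2) := by
    rw [← sum_sq_norm_charFourier hψ, mul_sum]
    refine le_trans (sum_le_sum fun b hb ↦ ?_)
      (sum_le_sum_of_subset_of_nonneg (subset_univ _) fun _ _ _ ↦ by positivity)
    rw [norm_mul, mul_pow, sq_norm_sum_addChar_mul_sq hψ h2 (ne_of_mem_erase hb), mul_comm]
  have inner := sum_sq_norm_sum_mul_addChar_neg_sq_div_le hψ h2 (charFourier ψ g)
    fun c ↦ charFourier ψ f (-c)
  have neg_sum : ∑ c, ‖charFourier ψ f (-c)‖ ^ 2 = ∑ c, ‖charFourier ψ f c‖ ^ 2 :=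
    Equiv.sum_comp (Equiv.neg F) fun c ↦ ‖charFourier ψ f c‖ ^ 2
  rw [neg_sum, sum_sq_norm_charFourier hψ,
    sum_sq_norm_charFourier hψ] at inner
  have rpow_eq : q ^ (11 / 4 : ℝ) = q ^ (3 / 4 : ℝ) * q ^ 2 := by
    rw [← Real.rpow_add_natCast q_pos.ne']
    norm_num
  refine le_of_mul_le_mul_left ?_ (pow_pos q_pos 2)
  calc q ^ 2 * ‖Fintype.card F * quadraticCount f g h - (∑ x, f x) * (∑ x, g x) * ∑ x, h x‖ ^ 2
      = ‖(Fintype.card F : ℂ) * (Fintype.card F * quadraticCount f g h -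
          (∑ x, f x) * (∑ x, g x) * ∑ x, h x)‖ ^ 2 := by
        rw [norm_mul _ (_ - _), Complex.norm_natCast, mul_pow]
    _ ≤ q * (q * ∑ x, ‖h x‖ ^ 2) * (3 * q ^ (3 / 4 : ℝ) *
          ((q * ∑ x, ‖g x‖ ^ 2) * (q * ∑ x, ‖f x‖ ^ 2))) := by
        rw [card_mul_quadraticCount_sub hψ h2]
        exact (sq_norm_sum_mul_le _ _ _).trans
          (mul_le_mul outer inner (by positivity) (by positivity))
    _ = _ := by
        rw [rpow_eq]
        ring

lemma quadraticCount_indicator {A : Finset F}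
    (hA : ∀ x ∈ A, ∀ y, y ≠ 0 → x + y ∈ A → x + y ^ 2 ∉ A) :
    quadraticCount ((A : Set F).indicator 1) ((A : Set F).indicator 1)
      ((A : Set F).indicator 1) = #A := by
  classical
  set χ : F → ℂ := (A : Set F).indicator 1
  have only_trivial (x y : F) :
      χ x * χ (x + y) * χ (x + y ^ 2) = if y = 0 then χ x else 0 := by
    simp only [χ, Set.indicator_apply, mem_coe, Pi.one_apply]
    grind
  simp only [quadraticCount, only_trivial]
  simp [χ, Set.indicator_apply]

lemma sq_card_mul_card_sub_pow_three_le (hF : ringChar F ≠ 2) {A : Finset F}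
    (hA : ∀ x ∈ A, ∀ y, y ≠ 0 → x + y ∈ A → x + y ^ 2 ∉ A) :
    (Fintype.card F * #A - #A ^ 3 : ℝ) ^ 2 ≤
      3 * (Fintype.card F : ℝ) ^ (11 / 4 : ℝ) * #A ^ 3 := by
  classical
  set χ : F → ℂ := (A : Set F).indicator 1
  have sum_indicator : ∑ x, χ x = #A := by simp [χ, Set.indicator_apply]
  have sum_sq_indicator : ∑ x, ‖χ x‖ ^ 2 = #A := by simp [χ, Set.indicator_apply, apply_ite]
  have count := sq_norm_quadraticCount_sub_le hF χ χ χ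
  rw [quadraticCount_indicator hA, sum_indicator, sum_sq_indicator, ← sq, ← sq, ← pow_succ,
    ← pow_succ] at count
  rw [← sq_abs, ← Real.norm_eq_abs, ← Complex.norm_real]
  push_cast
  exact count

end Counting

lemma mul_pow_three_lt_sq_mul_sub_pow_three {q n : ℝ} (hq : 1 ≤ q)
    (hn : 3 * q ^ (-(1 / 12 : ℝ)) * q < n) :
    3 * q ^ (11 / 4 : ℝ) * n ^ 3 < (q * n - n ^ 3) ^ 2 := by
  have q_pos : 0 < q := by linarith
  have n_sq : 2 * q ≤ n ^ 2 :=
    calc 2 * q ≤ 9 * q ^ (11 / 6 : ℝ) := by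
          have := Real.self_le_rpow_of_one_le hq (show (1 : ℝ) ≤ 11 / 6 by norm_num)
          linarith
      _ = (3 * q ^ (-(1 / 12 : ℝ)) * q) ^ 2 := by
          rw [mul_assoc, ← Real.rpow_add_one q_pos.ne', mul_pow, ← Real.rpow_mul_natCast q_pos.le]
          norm_num
      _ ≤ n ^ 2 := by gcongr
  have n_cube : 27 * q ^ (11 / 4 : ℝ) < n ^ 3 :=
    calc 27 * q ^ (11 / 4 : ℝ) = (3 * q ^ (-(1 / 12 : ℝ)) * q) ^ 3 := by
          rw [mul_assoc, ← Real.rpow_add_one q_pos.ne', mul_pow, ← Real.rpow_mul_natCast q_pos.le]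
          norm_num
      _ < n ^ 3 := by gcongr
  have n_pos : 0 < n := lt_trans (by positivity) hn
  have main : n ^ 3 / 2 ≤ n ^ 3 - q * n := by nlinarith
  calc 3 * q ^ (11 / 4 : ℝ) * n ^ 3 < n ^ 3 / 4 * n ^ 3 := by
        gcongr
        linarith [Real.rpow_pos_of_pos q_pos (11 / 4)]
    _ = (n ^ 3 / 2) ^ 2 := by ring
    _ ≤ (n ^ 3 - q * n) ^ 2 := by gcongr
    _ = (q * n - n ^ 3) ^ 2 := by ring

theorem stmt1_general {F : Type*} [Field F] [Fintype F] (hF : ringChar F ≠ 2) (A : Finset F)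
    (hA : (A.card : ℝ) > 3 * (Fintype.card F : ℝ) ^ (-(1 / 12 : ℝ)) * Fintype.card F) :
    ∃ x ∈ A, ∃ y : F, y ≠ 0 ∧ x + y ∈ A ∧ x + y ^ 2 ∈ A := by
  by_contra! pattern_free
  have one_le_card : (1 : ℝ) ≤ Fintype.card F := by exact_mod_cast Fintype.card_pos
  exact (mul_pow_three_lt_sq_mul_sub_pow_three one_le_card hA).not_ge
    (sq_card_mul_card_sub_pow_three_le hF pattern_free)

end

theorem stmt1 : ∃ c₁ : ℝ, 0 < c₁ ∧ ∀ (p : ℕ) [NeZero p], p.Prime → p ≠ 2 →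
    ∀ A : Finset (ZMod p), (A.card : ℝ) > c₁ * (p : ℝ) ^ (-(1 / 15 : ℝ)) * p →
    ∃ x ∈ A, ∃ y : ZMod p, y ≠ 0 ∧ x + y ∈ A ∧ x + y ^ 2 ∈ A := by
  refine ⟨3, by norm_num, fun p _ hp hp_ne_two A hA ↦ ?_⟩
  have : Fact p.Prime := ⟨hp⟩
  refine stmt1_general (by rwa [ZMod.ringChar_zmod_n]) A (lt_of_le_of_lt ?_ hA)
  rw [ZMod.card]
  gcongr <;> norm_num [hp.one_le]
end

section
/- There is an absolute constant c > 0 such that for every odd prime p and every subset A ⊆ F_p of density δ = |A|/p, the number of pairs (x, y) ∈ F_p × F_p with x ∈ A, x + y ∈ A, and x + y² ∈ A is at least (δ³ − c · p^(−1/10) · δ^(3/2)) · p². -/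
open Finset

/-!
Write `q` for the number of elements of the finite field. Replacing the third indicator function by
its balanced version `h` removes the main term. Applying the Cauchy–Schwarz inequality twice then
leaves the sum `∑ x, ∑ z, (∑ y, h (x - y + y ^ 2) * h (x - y + (y + z) ^ 2)) ^ 2`, that is, the sum
of `h a * h b * h c * h d` weighted by the number of times the grid `a, b, c, d` arises as the
values of `x - u + (u + t) ^ 2` at `u ∈ {y, y'}` and `t ∈ {0, z}`. Put `s = a - b - c + d`,
`m = b - a + d - c` and `n = c - a + d - b`. A representation with `z ≠ 0` and `y ≠ y'` is
determined by `k = z + y + y'`, and if `s`, `m` and `n` do not vanish, then the admissible `k` are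
the roots of `2 * s * k * (k - 1) = m * n`. There are `1 + χ(s) * χ(s + 2 * m * n)` of them, where
`χ` is the quadratic character.

Both `s` and `s + 2 * m * n` are differences of a function of `(a, d)` and the same function of
`(b, c)`, because `m * n = (d - a) ^ 2 - (b - c) ^ 2`. The term `1` contributes nothing, since `h`
has mean zero, and the second term is a quadratic form with kernel `χ(t - r) * χ(t' - r')`, whose
`ℓ²` operator norm is at most `q` since `∑ t, χ(t - r) * χ(t - r') = -1` for `r ≠ r'`. The
degenerate grids are sparse enough to be absorbed trivially.
-/

section FiniteSums

variable {α β : Type*} [Fintype α]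

lemma sum_sq_sum_fiber_le [Fintype β] [DecidableEq β] {g : α → β} {n : ℕ}
    (hg : ∀ b, #{a | g a = b} ≤ n) (φ : α → ℝ) :
    ∑ b, (∑ a with g a = b, φ a) ^ 2 ≤ n * ∑ a, φ a ^ 2 := by
  rw [← sum_fiberwise univ g (fun a ↦ φ a ^ 2), mul_sum]
  refine sum_le_sum fun b _ ↦ sq_sum_le_card_mul_sum_sq.trans ?_
  gcongr
  exact hg b

lemma sum_fiber_mul [Fintype β] [DecidableEq β] (g : α → β) (φ : α → ℝ) (K : β → ℝ) :
    ∑ b, (∑ a with g a = b, φ a) * K b = ∑ a, φ a * K (g a) := by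
  rw [← sum_fiberwise univ g fun a ↦ φ a * K (g a)]
  refine sum_congr rfl fun b _ ↦ ?_
  rw [sum_mul]
  exact sum_congr rfl fun a ha ↦ by rw [(mem_filter.1 ha).2]

lemma sum_sq_sum_add_le {G : Type*} [AddCommGroup G] [Fintype G] [DecidableEq G] {g : α → G} {n : ℕ}
    (hg : ∀ b, #{a | g a = b} ≤ n) {φ : G → ℝ} (hφ : ∀ x, 0 ≤ φ x) :
    ∑ x, (∑ a, φ (x + g a)) ^ 2 ≤ n * Fintype.card α * (∑ x, φ x) ^ 2 := by
  have hsup (x : G) : ∑ a, φ (x + g a) ≤ n * ∑ x, φ x := by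
    rw [← sum_fiberwise' univ g (fun b ↦ φ (x + b)), ← Equiv.sum_comp (Equiv.addLeft x) φ, mul_sum]
    refine sum_le_sum fun b _ ↦ ?_
    rw [sum_const, nsmul_eq_mul]
    exact mul_le_mul_of_nonneg_right (mod_cast hg b) (hφ _)
  have hsum : ∑ x, ∑ a, φ (x + g a) = Fintype.card α * ∑ x, φ x := by
    have hshift (a : α) : ∑ x, φ (x + g a) = ∑ x, φ x := Equiv.sum_comp (Equiv.addRight (g a)) φ
    rw [sum_comm]
    simp_rw [hshift, sum_const, card_univ, nsmul_eq_mul]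
  calc ∑ x, (∑ a, φ (x + g a)) ^ 2 ≤ ∑ x, (n * ∑ x, φ x) * ∑ a, φ (x + g a) := by
        refine sum_le_sum fun x _ ↦ ?_
        rw [sq]
        exact mul_le_mul_of_nonneg_right (hsup x) (sum_nonneg fun _ _ ↦ hφ _)
    _ = n * Fintype.card α * (∑ x, φ x) ^ 2 := by rw [← mul_sum, hsum]; ring

lemma sum_sq_mul_shift {G : Type*} [AddGroup G] [Fintype G] (g : G → ℝ) :
    ∑ v : G × G, (g v.1 * g (v.1 + v.2)) ^ 2 = (∑ x, g x ^ 2) ^ 2 := by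
  have hshift (x : G) : ∑ z, g (x + z) ^ 2 = ∑ z, g z ^ 2 :=
    Equiv.sum_comp (Equiv.addLeft x) fun z ↦ g z ^ 2
  simp_rw [Fintype.sum_prod_type, mul_pow, ← mul_sum, hshift, ← sum_mul, sq (∑ _, _)]

lemma sum_abs_mul_mul_indicator_le {R : α → α → Prop} [∀ u v, Decidable (R u v)] {n : ℕ}
    (hrow : ∀ u, #{v | R u v} ≤ n) (hcol : ∀ v, #{u | R u v} ≤ n) (φ : α → ℝ) :
    ∑ u, ∑ v, |φ u * φ v| * (if R u v then 1 else 0) ≤ n * ∑ u, φ u ^ 2 := by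
  have hrow' : ∑ u, ∑ v, φ u ^ 2 * (if R u v then 1 else 0) ≤ n * ∑ u, φ u ^ 2 := by
    simp_rw [← mul_sum, sum_boole, mul_comm _ ((#_ : ℕ) : ℝ), mul_sum]
    gcongr with u
    exact hrow u
  have hcol' : ∑ u, ∑ v, φ v ^ 2 * (if R u v then 1 else 0) ≤ n * ∑ v, φ v ^ 2 := by
    rw [sum_comm]
    simp_rw [← mul_sum, sum_boole, mul_comm _ ((#_ : ℕ) : ℝ), mul_sum]
    gcongr with v
    exact hcol v
  have hamgm : 2 * ∑ u, ∑ v, |φ u * φ v| * (if R u v then 1 else 0) ≤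
      ∑ u, ∑ v, φ u ^ 2 * (if R u v then 1 else 0) +
        ∑ u, ∑ v, φ v ^ 2 * (if R u v then 1 else 0) := by
    simp_rw [mul_sum, ← sum_add_distrib, ← add_mul, ← mul_assoc, abs_mul]
    gcongr with u _ v
    simpa [mul_assoc] using two_mul_le_add_sq |φ u| |φ v|
  linarith

lemma card_filter_le_of_fst_injOn [Fintype β] {p : α × β → Prop} [DecidablePred p]
    (hp : ∀ u v, p u → p v → u.1 = v.1 → u.2 = v.2) : #{u | p u} ≤ Fintype.card α :=
  card_le_card_of_injOn Prod.fst (fun _ _ ↦ mem_coe.2 (mem_univ _)) fun u hu v hv huv ↦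
    Prod.ext huv (hp u v (by simpa using hu) (by simpa using hv) huv)

end FiniteSums

section MulChar

variable {F : Type*} [Field F] [Fintype F]

lemma sum_mulChar_sub_mul_inv_sub {R : Type*} [CommRing R] [IsDomain R] [DecidableEq F]
    {χ : MulChar F R} (hχ : χ ≠ 1) (r s : F) :
    ∑ t, χ (t - r) * χ⁻¹ (t - s) = (if r = s then (Fintype.card F : R) else 0) - 1 := by
  rw [← Equiv.sum_comp (Equiv.addRight r)]
  simp only [Equiv.coe_addRight, add_sub_cancel_right]
  split_ifs with h
  · subst h
    simp_rw [add_sub_cancel_right, ← MulChar.mul_apply, mul_inv_cancel]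
    rw [MulChar.sum_one_eq_card_units, Fintype.card_units, Nat.cast_pred Fintype.card_pos]
  · have hd : s - r ≠ 0 := sub_ne_zero.2 (Ne.symm h)
    have hscale (x : F) : χ ((s - r) * x) * χ⁻¹ ((s - r) * x + r - s) =
        χ⁻¹ (-1) * (χ x * χ⁻¹ (1 - x)) := by
      rw [show (s - r) * x + r - s = (s - r) * (-1 * (1 - x)) by ring, map_mul, map_mul, map_mul,
        mul_mul_mul_comm, ← MulChar.mul_apply, mul_inv_cancel, MulChar.one_apply hd.isUnit]
      ring
    rw [← Equiv.sum_comp (Equiv.mulLeft₀ _ hd)]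
    simp only [Equiv.mulLeft₀_apply, hscale]
    rw [← mul_sum, ← jacobiSum, jacobiSum_nontrivial_inv hχ, mul_neg, ← MulChar.mul_apply,
      inv_mul_cancel, MulChar.one_apply isUnit_one.neg, zero_sub]

variable {χ : MulChar F ℝ}

lemma sum_sq_sum_mul_mulChar_sub_le (hχ : χ.IsQuadratic) (hχ' : χ ≠ 1) (g : F → ℝ) :
    ∑ t, (∑ r, g r * χ (t - r)) ^ 2 ≤ Fintype.card F * ∑ r, g r ^ 2 := by
  classical
  have hcorr (r s : F) : ∑ t, χ (t - r) * χ (t - s) =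
      (if r = s then (Fintype.card F : ℝ) else 0) - 1 := by
    simpa only [hχ.inv] using sum_mulChar_sub_mul_inv_sub hχ' r s
  have hexpand : ∑ t, (∑ r, g r * χ (t - r)) ^ 2 =
      ∑ r, ∑ s, g r * g s * ∑ t, χ (t - r) * χ (t - s) := by
    simp_rw [sq, sum_mul_sum, mul_sum]
    rw [sum_comm]
    refine sum_congr rfl fun r _ ↦ ?_
    rw [sum_comm]
    exact sum_congr rfl fun s _ ↦ sum_congr rfl fun t _ ↦ by ring
  calc ∑ t, (∑ r, g r * χ (t - r)) ^ 2
      = Fintype.card F * ∑ r, g r ^ 2 - (∑ r, g r) ^ 2 := by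
        simp only [hexpand, hcorr, mul_sub, sum_sub_distrib, mul_ite, mul_zero, mul_one,
          sum_ite_eq, mem_univ, if_true, ← sum_mul_sum, ← sum_mul, ← sq]
        ring
    _ ≤ Fintype.card F * ∑ r, g r ^ 2 := sub_le_self _ (sq_nonneg _)

lemma sum_sq_sum_mul_mulChar_sub_prod_le (hχ : χ.IsQuadratic) (hχ' : χ ≠ 1) (g : F × F → ℝ) :
    ∑ u : F × F, (∑ v, g v * (χ (u.1 - v.1) * χ (u.2 - v.2))) ^ 2 ≤
      (Fintype.card F : ℝ) ^ 2 * ∑ v, g v ^ 2 := by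
  set q : ℝ := (Fintype.card F : ℝ)
  have hiter (t t' : F) : ∑ r, ∑ r', g (r, r') * (χ (t - r) * χ (t' - r')) =
      ∑ r, (∑ r', g (r, r') * χ (t' - r')) * χ (t - r) := by
    simp_rw [sum_mul]
    exact sum_congr rfl fun r _ ↦ sum_congr rfl fun r' _ ↦ by ring
  simp_rw [Fintype.sum_prod_type, hiter]
  rw [sum_comm]
  calc ∑ t', ∑ t, (∑ r, (∑ r', g (r, r') * χ (t' - r')) * χ (t - r)) ^ 2
      ≤ ∑ t', q * ∑ r, (∑ r', g (r, r') * χ (t' - r')) ^ 2 :=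
        sum_le_sum fun t' _ ↦ sum_sq_sum_mul_mulChar_sub_le hχ hχ' _
    _ = q * ∑ r, ∑ t', (∑ r', g (r, r') * χ (t' - r')) ^ 2 := by rw [← mul_sum, sum_comm]
    _ ≤ q * ∑ r, q * ∑ r', g (r, r') ^ 2 := by
        gcongr with r
        exact sum_sq_sum_mul_mulChar_sub_le hχ hχ' _
    _ = q ^ 2 * ∑ r, ∑ r', g (r, r') ^ 2 := by rw [← mul_sum]; ring

lemma sum_mul_sum_mul_mulChar_sub_prod_le (hχ : χ.IsQuadratic) (hχ' : χ ≠ 1) (g : F × F → ℝ) :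
    ∑ u, g u * ∑ v, g v * (χ (u.1 - v.1) * χ (u.2 - v.2)) ≤ Fintype.card F * ∑ v, g v ^ 2 := by
  refine le_of_sq_le_sq ?_ (by positivity)
  calc _ ≤ _ := sum_mul_sq_le_sq_mul_sq univ g _
    _ ≤ (∑ v, g v ^ 2) * ((Fintype.card F : ℝ) ^ 2 * ∑ v, g v ^ 2) := by
        gcongr
        exact sum_sq_sum_mul_mulChar_sub_prod_le hχ hχ' g
    _ = (Fintype.card F * ∑ v, g v ^ 2) ^ 2 := by ring

lemma sum_sum_mul_mulChar_sub_comp_le {α : Type*} [Fintype α] [DecidableEq F] (hχ : χ.IsQuadratic)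
    (hχ' : χ ≠ 1) {g : α → F × F} {n : ℕ} (hg : ∀ b, #{a | g a = b} ≤ n) (φ : α → ℝ) :
    ∑ u, ∑ v, φ u * φ v * (χ ((g u).1 - (g v).1) * χ ((g u).2 - (g v).2)) ≤
      n * Fintype.card F * ∑ a, φ a ^ 2 := by
  calc ∑ u, ∑ v, φ u * φ v * (χ ((g u).1 - (g v).1) * χ ((g u).2 - (g v).2))
      = ∑ b, (∑ a with g a = b, φ a) * ∑ c, (∑ a with g a = c, φ a) *
          (χ (b.1 - c.1) * χ (b.2 - c.2)) := by
        simp_rw [sum_fiber_mul g φ, mul_sum, mul_assoc]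
    _ ≤ Fintype.card F * ∑ b, (∑ a with g a = b, φ a) ^ 2 :=
        sum_mul_sum_mul_mulChar_sub_prod_le hχ hχ' _
    _ ≤ Fintype.card F * (n * ∑ a, φ a ^ 2) := by
        gcongr
        exact sum_sq_sum_fiber_le hg φ
    _ = n * Fintype.card F * ∑ a, φ a ^ 2 := by ring

end MulChar

section QuadraticChar

variable {F : Type*} [Field F] [Fintype F] [DecidableEq F]

lemma card_filter_quadratic_eq_zero (hF : ringChar F ≠ 2) {a : F} (ha : a ≠ 0) (b c : F) :
    (#{k | a * (k * k) + b * k + c = 0} : ℤ) = quadraticChar F (discrim a b c) + 1 := by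
  have h2 : (2 : F) ≠ 0 := Ring.two_ne_zero hF
  have : NeZero (2 : F) := ⟨h2⟩
  rw [← quadraticChar_card_sqrts hF]
  congr 1
  refine card_nbij' (fun k ↦ 2 * a * k + b) (fun x ↦ (x - b) / (2 * a)) ?_ ?_ ?_ ?_
  · intro k hk
    simpa [quadratic_eq_zero_iff_discrim_eq_sq ha, eq_comm] using hk
  · intro x hx
    have hx' : 2 * a * ((x - b) / (2 * a)) + b = x := by field_simp; ring
    simpa [quadratic_eq_zero_iff_discrim_eq_sq ha, hx', eq_comm] using hx
  · intro k _
    simp only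
    field_simp
    ring
  · intro x _
    simp only
    field_simp
    ring

lemma card_filter_quadratic_eq_zero_le_two (hF : ringChar F ≠ 2) {a : F} (ha : a ≠ 0) (b c : F) :
    #{k | a * (k * k) + b * k + c = 0} ≤ 2 := by
  have hcard := card_filter_quadratic_eq_zero hF ha b c
  rcases quadraticChar_isQuadratic F (discrim a b c) with h | h | h <;> lia

variable (F) in
/-- The quadratic character of `F`, with real values, so that it can serve as the kernel of a real
quadratic form. -/
noncomputable def realQuadraticChar : MulChar F ℝ :=
  (quadraticChar F).ringHomComp (Int.castRingHom ℝ)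

lemma realQuadraticChar_isQuadratic : (realQuadraticChar F).IsQuadratic :=
  (quadraticChar_isQuadratic F).comp _

lemma realQuadraticChar_ne_one (hF : ringChar F ≠ 2) : realQuadraticChar F ≠ 1 :=
  (MulChar.ringHomComp_ne_one_iff Int.cast_injective).2 (quadraticChar_ne_one hF)

lemma abs_realQuadraticChar_le_one (x : F) : |realQuadraticChar F x| ≤ 1 := by
  rcases realQuadraticChar_isQuadratic x with h | h | h <;> simp [h]

end QuadraticChar

section Corners

variable {F : Type*} [Field F]

/-- The four values `a, b, c, d` of `x - u + (u + t)^2` at `u ∈ {y, y'}`, `t ∈ {0, z}`, where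
`v = (x, z, y, y')`; they are the arguments of `h` when the square of
`∑ y, h (x - y + y^2) * h (x - y + (y + z)^2)` is expanded. They are grouped as `((a, d), (b, c))`,
into the diagonals of this `2 × 2` grid. -/
def corners (v : F × F × F × F) : (F × F) × (F × F) :=
  ((v.1 - v.2.2.1 + v.2.2.1 ^ 2, v.1 - v.2.2.2 + (v.2.2.2 + v.2.1) ^ 2),
    (v.1 - v.2.2.1 + (v.2.2.1 + v.2.1) ^ 2, v.1 - v.2.2.2 + v.2.2.2 ^ 2))

/-- The second difference `a - b - c + d` of a grid `((a, d), (b, c))`. -/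
def mixedDiff (P : (F × F) × (F × F)) : F := P.1.1 + P.1.2 - (P.2.1 + P.2.2)

/-- The sum `(b - a) + (d - c)` of the differences of a grid `((a, d), (b, c))` in the variable `t`
of `corners`. -/
def shiftDiff (P : (F × F) × (F × F)) : F := P.1.2 - P.1.1 + (P.2.1 - P.2.2)

/-- The sum `(c - a) + (d - b)` of the differences of a grid `((a, d), (b, c))` in the variable `u`
of `corners`. -/
def pointDiff (P : (F × F) × (F × F)) : F := P.1.2 - P.1.1 - (P.2.1 - P.2.2)

lemma corners_eq_iff (h2 : (2 : F) ≠ 0) {x z y y' : F} {P : (F × F) × (F × F)} :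
    corners (x, z, y, y') = P ↔ x = P.1.1 + y - y ^ 2 ∧ mixedDiff P = 2 * z * (y' - y) ∧
      shiftDiff P = 2 * z * (z + y + y') ∧ pointDiff P = 2 * (y' - y) * (z + y + y' - 1) := by
  obtain ⟨⟨a, d⟩, b, c⟩ := P
  simp only [corners, mixedDiff, shiftDiff, pointDiff, Prod.mk.injEq]
  constructor
  · rintro ⟨⟨rfl, rfl⟩, rfl, rfl⟩
    refine ⟨?_, ?_, ?_, ?_⟩ <;> ring
  · rintro ⟨rfl, hs, hm, hn⟩
    refine ⟨⟨by ring, ?_⟩, ?_, ?_⟩ <;> apply mul_left_cancel₀ h2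
    · linear_combination -hm - hn
    · linear_combination hs - hm
    · linear_combination hs - hn

variable [Fintype F] [DecidableEq F]

/-- The quadruples `(x, z, y, y')` with `z ≠ 0` and `y ≠ y'` whose grid of corners is `P`. -/
def cornersFiber (P : (F × F) × (F × F)) : Finset (F × F × F × F) :=
  {v | (v.2.1 ≠ 0 ∧ v.2.2.1 ≠ v.2.2.2) ∧ corners v = P}

/-- The parameter `z + y + y'` of `(x, z, y, y')`, which coordinatizes the fibers of `corners`. -/
def fiberParam (v : F × F × F × F) : F := v.2.1 + v.2.2.1 + v.2.2.2

lemma mem_cornersFiber (h2 : (2 : F) ≠ 0) {x z y y' : F} {P : (F × F) × (F × F)} :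
    (x, z, y, y') ∈ cornersFiber P ↔ (z ≠ 0 ∧ y ≠ y') ∧ x = P.1.1 + y - y ^ 2 ∧
      mixedDiff P = 2 * z * (y' - y) ∧ shiftDiff P = 2 * z * fiberParam (x, z, y, y') ∧
      pointDiff P = 2 * (y' - y) * (fiberParam (x, z, y, y') - 1) := by
  simp only [cornersFiber, mem_filter, mem_univ, true_and, corners_eq_iff h2, fiberParam]

-- For a common value `k` of `fiberParam`, `shiftDiff` recovers `z` if `k ≠ 0` and `pointDiff`
-- recovers `y' - y` if `k ≠ 1`; either of these determines the other through `mixedDiff`.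
lemma injOn_fiberParam (h2 : (2 : F) ≠ 0) (P : (F × F) × (F × F)) :
    Set.InjOn fiberParam (cornersFiber P : Set (F × F × F × F)) := by
  rintro ⟨x₁, z₁, y₁, y₁'⟩ hv₁ ⟨x₂, z₂, y₂, y₂'⟩ hv₂ hk
  obtain ⟨⟨hz₁, -⟩, rfl, hs₁, hm₁, hn₁⟩ := (mem_cornersFiber h2).1 (mem_coe.1 hv₁)
  obtain ⟨⟨hz₂, hy₂⟩, rfl, hs₂, hm₂, hn₂⟩ := (mem_cornersFiber h2).1 (mem_coe.1 hv₂)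
  rw [hk] at hm₁ hn₁
  simp only [fiberParam] at hk hm₁ hm₂ hn₁ hn₂
  have hzw : z₁ = z₂ ∧ y₁' - y₁ = y₂' - y₂ := by
    by_cases hk₀ : z₂ + y₂ + y₂' = 0
    · have hw : y₁' - y₁ = y₂' - y₂ := by
        apply mul_left_cancel₀ h2
        linear_combination hn₁ - hn₂ + 2 * (y₁' - y₁ - (y₂' - y₂)) * hk₀
      rw [hw] at hs₁
      refine ⟨mul_left_cancel₀ h2 (mul_right_cancel₀ (sub_ne_zero.2 hy₂.symm) ?_), hw⟩
      exact hs₁.symm.trans hs₂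
    · have hz : z₁ = z₂ := mul_left_cancel₀ h2 (mul_right_cancel₀ hk₀ (hm₁.symm.trans hm₂))
      subst hz
      exact ⟨rfl, mul_left_cancel₀ (mul_ne_zero h2 hz₁) (hs₁.symm.trans hs₂)⟩
  obtain ⟨rfl, hw⟩ := hzw
  have hy : y₁ = y₂ := by
    apply mul_left_cancel₀ h2
    linear_combination hk - hw
  subst hy
  rw [sub_left_inj.1 hw]

lemma card_cornersFiber_le_one (h2 : (2 : F) ≠ 0) {P : (F × F) × (F × F)}
    (hP : mixedDiff P = 0 ∨ shiftDiff P = 0 ∨ pointDiff P = 0) : #(cornersFiber P) ≤ 1 := by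
  refine card_le_one.2 ?_
  rintro ⟨x₁, z₁, y₁, y₁'⟩ hv₁ ⟨x₂, z₂, y₂, y₂'⟩ hv₂
  refine injOn_fiberParam h2 P hv₁ hv₂ ?_
  obtain ⟨⟨hz₁, hy₁⟩, -, hs₁, hm₁, hn₁⟩ := (mem_cornersFiber h2).1 hv₁
  obtain ⟨⟨hz₂, hy₂⟩, -, -, hm₂, hn₂⟩ := (mem_cornersFiber h2).1 hv₂
  have hw₁ := sub_ne_zero.2 hy₁.symm
  have hw₂ := sub_ne_zero.2 hy₂.symm
  rcases hP with h | h | h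
  · simp [h, h2, hz₁, hw₁] at hs₁
  · simp_all
  · simp_all [sub_eq_zero]

lemma exists_mem_cornersFiber (h2 : (2 : F) ≠ 0) {P : (F × F) × (F × F)} (hm : shiftDiff P ≠ 0)
    (hn : pointDiff P ≠ 0) {k : F}
    (hk : 2 * mixedDiff P * (k * (k - 1)) = shiftDiff P * pointDiff P) :
    ∃ v ∈ cornersFiber P, fiberParam v = k := by
  have hkk : k * (k - 1) ≠ 0 := right_ne_zero_of_mul (hk ▸ mul_ne_zero hm hn)
  have hk₀ : k ≠ 0 := left_ne_zero_of_mul hkk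
  have hk₁ : k - 1 ≠ 0 := right_ne_zero_of_mul hkk
  obtain ⟨z, hz⟩ : ∃ z, shiftDiff P = 2 * z * k := ⟨shiftDiff P / (2 * k), by field_simp⟩
  obtain ⟨w, hw⟩ : ∃ w, pointDiff P = 2 * w * (k - 1) :=
    ⟨pointDiff P / (2 * (k - 1)), by field_simp⟩
  obtain ⟨y, rfl⟩ : ∃ y, k = z + y + (y + w) := ⟨(k - z - w) / 2, by field_simp; ring⟩
  have hs : mixedDiff P = 2 * z * w := by
    apply mul_left_cancel₀ h2
    apply mul_right_cancel₀ hkk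
    rw [hk, hz, hw]
    ring
  have hz₀ : z ≠ 0 := by
    rintro rfl
    simp [hz] at hm
  have hw₀ : w ≠ 0 := by
    rintro rfl
    simp [hw] at hn
  exact ⟨(P.1.1 + y - y ^ 2, z, y, y + w), (mem_cornersFiber h2).2
    ⟨⟨hz₀, by simpa using hw₀⟩, rfl, by simpa, hz, by simpa⟩, rfl⟩

lemma card_cornersFiber_eq (hF : ringChar F ≠ 2) {P : (F × F) × (F × F)} (hs : mixedDiff P ≠ 0)
    (hm : shiftDiff P ≠ 0) (hn : pointDiff P ≠ 0) :
    (#(cornersFiber P) : ℤ) = 1 + quadraticChar F (mixedDiff P) *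
      quadraticChar F (mixedDiff P + 2 * (shiftDiff P * pointDiff P)) := by
  have h2 : (2 : F) ≠ 0 := Ring.two_ne_zero hF
  set s := mixedDiff P
  set m := shiftDiff P
  set n := pointDiff P
  have hroots : #(cornersFiber P) =
      #{k : F | 2 * s * (k * k) + -(2 * s) * k + -(m * n) = 0} := by
    refine card_nbij fiberParam ?_ (injOn_fiberParam h2 P) ?_
    · rintro ⟨x, z, y, y'⟩ hv
      obtain ⟨-, -, hs', hm', hn'⟩ := (mem_cornersFiber h2).1 (mem_coe.1 hv)
      simp only [coe_filter, mem_univ, true_and, Set.mem_ofPred_eq]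
      rw [show s = _ from hs', show m = _ from hm', show n = _ from hn']
      ring
    · intro k hk
      simp only [coe_filter, mem_univ, true_and, Set.mem_ofPred_eq] at hk
      exact exists_mem_cornersFiber h2 hm hn (by linear_combination hk)
  have hdiscrim : discrim (2 * s) (-(2 * s)) (-(m * n)) = 2 ^ 2 * (s * (s + 2 * (m * n))) := by
    rw [discrim]
    ring
  rw [hroots, card_filter_quadratic_eq_zero hF (mul_ne_zero h2 hs), hdiscrim, map_mul, map_mul,
    quadraticChar_sq_one' h2]
  ring

/-- The number of points that `cornersFiber P` has when none of its three differences vanishes. -/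
noncomputable def expectedFiberCard (P : (F × F) × (F × F)) : ℝ :=
  1 + realQuadraticChar F (mixedDiff P) *
    realQuadraticChar F (mixedDiff P + 2 * (shiftDiff P * pointDiff P))

/-- The number of the three differences of `P` that vanish. -/
def degeneracy (P : (F × F) × (F × F)) : ℝ :=
  (if mixedDiff P = 0 then 1 else 0) + (if shiftDiff P = 0 then 1 else 0) +
    (if pointDiff P = 0 then 1 else 0)

lemma abs_card_cornersFiber_sub_le (hF : ringChar F ≠ 2) (P : (F × F) × (F × F)) :
    |#(cornersFiber P) - expectedFiberCard P| ≤ 2 * degeneracy P := by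
  by_cases hP : mixedDiff P = 0 ∨ shiftDiff P = 0 ∨ pointDiff P = 0
  · have hcard : (#(cornersFiber P) : ℝ) ≤ 1 :=
      mod_cast card_cornersFiber_le_one (Ring.two_ne_zero hF) hP
    have hdegen : 1 ≤ degeneracy P := by
      rw [degeneracy]
      split_ifs <;> simp_all
    have hchar : |expectedFiberCard P - 1| ≤ 1 := by
      rw [expectedFiberCard, add_sub_cancel_left, abs_mul]
      exact mul_le_one₀ (abs_realQuadraticChar_le_one _) (abs_nonneg _)
        (abs_realQuadraticChar_le_one _)
    rw [abs_le] at hchar ⊢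
    constructor <;> linarith [Nat.cast_nonneg (α := ℝ) #(cornersFiber P)]
  · push Not at hP
    have hcard : (#(cornersFiber P) : ℝ) = expectedFiberCard P := by
      have := congrArg (Int.cast : ℤ → ℝ) (card_cornersFiber_eq hF hP.1 hP.2.1 hP.2.2)
      push_cast at this
      exact this
    simp [hcard, degeneracy, hP]

lemma sum_abs_mul_degeneracy_le (φ : F × F → ℝ) :
    ∑ u, ∑ v, |φ u * φ v| * degeneracy (u, v) ≤ 3 * Fintype.card F * ∑ u, φ u ^ 2 := by
  have hs := sum_abs_mul_mul_indicator_le (R := fun u v : F × F ↦ mixedDiff (u, v) = 0)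
    (n := Fintype.card F)
    (fun u ↦ card_filter_le_of_fst_injOn fun v w hv hw h ↦ by grind [mixedDiff])
    (fun u ↦ card_filter_le_of_fst_injOn fun v w hv hw h ↦ by grind [mixedDiff]) φ
  have hm := sum_abs_mul_mul_indicator_le (R := fun u v : F × F ↦ shiftDiff (u, v) = 0)
    (n := Fintype.card F)
    (fun u ↦ card_filter_le_of_fst_injOn fun v w hv hw h ↦ by grind [shiftDiff])
    (fun u ↦ card_filter_le_of_fst_injOn fun v w hv hw h ↦ by grind [shiftDiff]) φ
  have hn := sum_abs_mul_mul_indicator_le (R := fun u v : F × F ↦ pointDiff (u, v) = 0)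
    (n := Fintype.card F)
    (fun u ↦ card_filter_le_of_fst_injOn fun v w hv hw h ↦ by grind [pointDiff])
    (fun u ↦ card_filter_le_of_fst_injOn fun v w hv hw h ↦ by grind [pointDiff]) φ
  simp only [degeneracy, mul_add, sum_add_distrib]
  linarith

/-- The map whose two components take on a grid `(u, v)` the differences `mixedDiff` and
`mixedDiff + 2 * (shiftDiff * pointDiff)`. -/
def diagonalForms (u : F × F) : F × F :=
  (u.1 + u.2, u.1 + u.2 + 2 * (u.1 - u.2) ^ 2)

lemma card_filter_diagonalForms_eq_le_two (hF : ringChar F ≠ 2) (b : F × F) :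
    #{u | diagonalForms u = b} ≤ 2 := by
  rcases ({u | diagonalForms u = b} : Finset (F × F)).eq_empty_or_nonempty with h | ⟨u, hu⟩
  · simp [h]
  refine (card_le_card (t := {u, u.swap}) fun v hv ↦ ?_).trans card_le_two
  have huv : diagonalForms v = diagonalForms u :=
    (mem_filter.1 hv).2.trans (mem_filter.1 hu).2.symm
  obtain ⟨hsum, hsq⟩ := Prod.ext_iff.1 huv
  simp only [diagonalForms] at hsum hsq
  have h2 : (2 : F) ≠ 0 := Ring.two_ne_zero hF
  have hroot : (v.1 - u.1) * (v.1 - u.2) = 0 := by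
    apply mul_left_cancel₀ (pow_ne_zero 3 h2)
    linear_combination hsq - hsum + 2 * (3 * v.1 - v.2 - u.1 - u.2) * hsum
  rw [mem_insert, mem_singleton, Prod.ext_iff, Prod.ext_iff, Prod.fst_swap, Prod.snd_swap]
  rcases mul_eq_zero.1 hroot with h | h
  · exact .inl ⟨sub_eq_zero.1 h, by linear_combination hsum - h⟩
  · exact .inr ⟨sub_eq_zero.1 h, by linear_combination hsum - h⟩

lemma sum_mul_expectedFiberCard_le (hF : ringChar F ≠ 2) {φ : F × F → ℝ} (hφ : ∑ u, φ u = 0) :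
    ∑ u, ∑ v, φ u * φ v * expectedFiberCard (u, v) ≤ 2 * Fintype.card F * ∑ u, φ u ^ 2 := by
  have hs (u v : F × F) : mixedDiff (u, v) = (diagonalForms u).1 - (diagonalForms v).1 := rfl
  have ht (u v : F × F) : mixedDiff (u, v) + 2 * (shiftDiff (u, v) * pointDiff (u, v)) =
      (diagonalForms u).2 - (diagonalForms v).2 := by
    simp only [mixedDiff, shiftDiff, pointDiff, diagonalForms]
    ring
  simp only [expectedFiberCard, ht]
  simp only [hs, mul_add, mul_one, sum_add_distrib]
  simpa only [← sum_mul_sum, hφ, zero_mul, zero_add, Nat.cast_ofNat] using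
    sum_sum_mul_mulChar_sub_comp_le realQuadraticChar_isQuadratic (realQuadraticChar_ne_one hF)
      (card_filter_diagonalForms_eq_le_two hF) φ

lemma sum_mul_card_cornersFiber_le (hF : ringChar F ≠ 2) {φ : F × F → ℝ} (hφ : ∑ u, φ u = 0) :
    ∑ u, ∑ v, φ u * φ v * #(cornersFiber (u, v)) ≤ 8 * Fintype.card F * ∑ u, φ u ^ 2 := by
  have hpoint (u v : F × F) : φ u * φ v * #(cornersFiber (u, v)) ≤
      φ u * φ v * expectedFiberCard (u, v) + 2 * (|φ u * φ v| * degeneracy (u, v)) := by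
    rw [← sub_le_iff_le_add', ← mul_sub]
    calc _ ≤ |φ u * φ v| * |#(cornersFiber (u, v)) - expectedFiberCard (u, v)| := by
          rw [← abs_mul]
          exact le_abs_self _
      _ ≤ |φ u * φ v| * (2 * degeneracy (u, v)) := by
          gcongr
          exact abs_card_cornersFiber_sub_le hF _
      _ = _ := by ring
  calc ∑ u, ∑ v, φ u * φ v * #(cornersFiber (u, v))
      ≤ ∑ u, ∑ v, φ u * φ v * expectedFiberCard (u, v) +
          2 * ∑ u, ∑ v, |φ u * φ v| * degeneracy (u, v) := by
        simp_rw [mul_sum, ← sum_add_distrib]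
        exact sum_le_sum fun u _ ↦ sum_le_sum fun v _ ↦ hpoint u v
    _ ≤ 2 * Fintype.card F * ∑ u, φ u ^ 2 + 2 * (3 * Fintype.card F * ∑ u, φ u ^ 2) := by
        gcongr
        · exact sum_mul_expectedFiberCard_le hF hφ
        · exact sum_abs_mul_degeneracy_le φ
    _ = 8 * Fintype.card F * ∑ u, φ u ^ 2 := by ring

end Corners

section GridSums

variable {F : Type*} [Field F]

/-- The product of the values of `h` at the four entries of a grid; evaluated at `corners v`, it is
a term of the expanded square. -/
def gridProd (h : F → ℝ) (P : (F × F) × (F × F)) : ℝ :=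
  h P.1.1 * h P.1.2 * (h P.2.1 * h P.2.2)

variable [Fintype F]

lemma sum_gridProd_corners_nondegenerate_le [DecidableEq F] (hF : ringChar F ≠ 2)
    {h : F → ℝ} (hh : ∑ x, h x = 0) :
    ∑ v : F × F × F × F with v.2.1 ≠ 0 ∧ v.2.2.1 ≠ v.2.2.2, gridProd h (corners v) ≤
      8 * Fintype.card F * (∑ x, h x ^ 2) ^ 2 := by
  have hφ : ∑ u : F × F, h u.1 * h u.2 = 0 := by
    rw [Fintype.sum_prod_type, ← sum_mul_sum, hh, zero_mul]
  have hφsq : ∑ u : F × F, (h u.1 * h u.2) ^ 2 = (∑ x, h x ^ 2) ^ 2 := by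
    simp_rw [Fintype.sum_prod_type, mul_pow]
    rw [← sum_mul_sum, sq]
  rw [← hφsq]
  refine le_of_eq_of_le ?_ (sum_mul_card_cornersFiber_le hF hφ)
  rw [← sum_fiberwise' _ corners (gridProd h), ← Fintype.sum_prod_type']
  refine sum_congr rfl fun P _ ↦ ?_
  rw [sum_const, nsmul_eq_mul, mul_comm, filter_filter]
  rfl

lemma sum_sq_sum_add_quadratic_le (hF : ringChar F ≠ 2) (b : F) {φ : F → ℝ} (hφ : ∀ x, 0 ≤ φ x) :
    ∑ x, (∑ y, φ (x + (y ^ 2 + b * y))) ^ 2 ≤ 2 * Fintype.card F * (∑ x, φ x) ^ 2 := by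
  classical
  refine sum_sq_sum_add_le (n := 2) (fun c ↦ ?_) hφ
  refine le_of_eq_of_le ?_ (card_filter_quadratic_eq_zero_le_two hF one_ne_zero b (-c))
  simp only [one_mul, ← sq, ← sub_eq_add_neg, sub_eq_zero]

lemma sum_gridProd_corners_shift_eq_zero_le [DecidableEq F] (hF : ringChar F ≠ 2) (h : F → ℝ) :
    ∑ v : F × F × F × F with v.2.1 = 0, gridProd h (corners v) ≤
      2 * Fintype.card F * (∑ x, h x ^ 2) ^ 2 := by
  refine le_of_eq_of_le ?_ (sum_sq_sum_add_quadratic_le hF (-1) fun x ↦ sq_nonneg (h x))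
  simp only [sum_filter, Fintype.sum_prod_type, sq (∑ _, _), sum_mul_sum]
  refine sum_congr rfl fun x _ ↦ (Fintype.sum_eq_single (0 : F) fun z hz ↦ by simp [hz]).trans ?_
  refine sum_congr rfl fun y _ ↦ sum_congr rfl fun y' _ ↦ ?_
  simp only [gridProd, corners, add_zero, if_true]
  ring_nf

lemma sum_gridProd_corners_point_eq_le [DecidableEq F] (hF : ringChar F ≠ 2) (h : F → ℝ) :
    ∑ v : F × F × F × F with v.2.2.1 = v.2.2.2, gridProd h (corners v) ≤
      2 * Fintype.card F * (∑ x, h x ^ 2) ^ 2 := by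
  refine le_of_eq_of_le ?_ (sum_sq_sum_add_quadratic_le hF 0 fun x ↦ sq_nonneg (h x))
  calc _ = ∑ x, ∑ z, ∑ y, h (x - y + y ^ 2) ^ 2 * h (x - y + (y + z) ^ 2) ^ 2 := by
        simp only [sum_filter, Fintype.sum_prod_type, sum_ite_eq, mem_univ, if_true]
        refine sum_congr rfl fun x _ ↦ sum_congr rfl fun z _ ↦ sum_congr rfl fun y _ ↦ ?_
        simp only [gridProd, corners]
        ring
    _ = ∑ y, ∑ x, ∑ z, h (x - y + y ^ 2) ^ 2 * h (x - y + (y + z) ^ 2) ^ 2 := by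
        rw [sum_comm_cycle]
    _ = ∑ y, ∑ x, ∑ z, h (x + y ^ 2) ^ 2 * h (x + z ^ 2) ^ 2 := by
        refine sum_congr rfl fun y _ ↦ ?_
        rw [← Equiv.sum_comp (Equiv.addRight y)]
        refine sum_congr rfl fun x _ ↦ ?_
        rw [← Equiv.sum_comp (Equiv.subRight y)]
        simp
    _ = ∑ x, (∑ y, h (x + (y ^ 2 + 0 * y)) ^ 2) ^ 2 := by
        rw [sum_comm]
        simp only [zero_mul, add_zero, sq (∑ _, _), sum_mul_sum]

lemma sum_gridProd_corners_le (hF : ringChar F ≠ 2) {h : F → ℝ} (hh : ∑ x, h x = 0) :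
    ∑ v : F × F × F × F, gridProd h (corners v) ≤ 12 * Fintype.card F * (∑ x, h x ^ 2) ^ 2 := by
  classical
  have hz (x y y' : F) : 0 ≤ gridProd h (corners (x, 0, y, y')) := by
    calc 0 ≤ (h (x - y + y ^ 2) * h (x - y' + y' ^ 2)) ^ 2 := sq_nonneg _
      _ = gridProd h (corners (x, 0, y, y')) := by
        simp only [gridProd, corners, add_zero]
        ring
  have hsplit : ∑ v : F × F × F × F, gridProd h (corners v) ≤
      ∑ v : F × F × F × F with v.2.1 ≠ 0 ∧ v.2.2.1 ≠ v.2.2.2, gridProd h (corners v) +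
        ∑ v : F × F × F × F with v.2.1 = 0, gridProd h (corners v) +
        ∑ v : F × F × F × F with v.2.2.1 = v.2.2.2, gridProd h (corners v) := by
    simp_rw [sum_filter, ← sum_add_distrib]
    refine sum_le_sum fun ⟨x, z, y, y'⟩ _ ↦ ?_
    rcases eq_or_ne z 0 with rfl | hz₀ <;> rcases eq_or_ne y y' with rfl | hyy'
    · simpa using hz x y y
    · simp [hyy']
    · simp [hz₀]
    · simp [hz₀, hyy']
  linarith [sum_gridProd_corners_nondegenerate_le hF hh, sum_gridProd_corners_shift_eq_zero_le hF h,
    sum_gridProd_corners_point_eq_le hF h]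

lemma sum_sum_sq_sum_mul_le (hF : ringChar F ≠ 2) {h : F → ℝ} (hh : ∑ x, h x = 0) :
    ∑ x, ∑ z, (∑ y, h (x - y + y ^ 2) * h (x - y + (y + z) ^ 2)) ^ 2 ≤
      12 * Fintype.card F * (∑ x, h x ^ 2) ^ 2 := by
  refine le_of_eq_of_le ?_ (sum_gridProd_corners_le hF hh)
  simp_rw [Fintype.sum_prod_type, sq (∑ _, _), sum_mul_sum]
  refine sum_congr rfl fun x _ ↦ sum_congr rfl fun z _ ↦ sum_congr rfl fun y _ ↦
    sum_congr rfl fun y' _ ↦ ?_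
  simp only [gridProd, corners]
  ring

end GridSums

section ProgressionForm

variable {R : Type*} [CommRing R] [Fintype R]

/-- The trilinear form counting the configurations `x, x + y, x + y^2`. -/
def progressionForm (f g h : R → ℝ) : ℝ := ∑ x, ∑ y, f x * g (x + y) * h (x + y ^ 2)

lemma progressionForm_sub_const (f g h : R → ℝ) (γ : ℝ) :
    progressionForm f g (fun x ↦ h x - γ) =
      progressionForm f g h - (∑ x, f x) * (∑ x, g x) * γ := by
  have hshift (x : R) : ∑ y, g (x + y) = ∑ y, g y := Equiv.sum_comp (Equiv.addLeft x) g
  simp_rw [progressionForm, mul_sub, sum_sub_distrib, ← sum_mul, ← mul_sum, hshift, ← sum_mul]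

lemma sum_sq_sum_progression_eq (g h : R → ℝ) :
    ∑ x, (∑ y, g (x + y) * h (x + y ^ 2)) ^ 2 =
      ∑ v : R × R, g v.1 * g (v.1 + v.2) *
        ∑ y, h (v.1 - y + y ^ 2) * h (v.1 - y + (y + v.2) ^ 2) := by
  calc _ = ∑ x, ∑ y, ∑ z, g (x + y) * h (x + y ^ 2) *
        (g (x + (y + z)) * h (x + (y + z) ^ 2)) := by
        simp_rw [sq (∑ _, _), sum_mul_sum]
        refine sum_congr rfl fun x _ ↦ sum_congr rfl fun y _ ↦ ?_
        exact (Equiv.sum_comp (Equiv.addLeft y) _).symm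
    _ = ∑ y, ∑ x, ∑ z, g x * g (x + z) * (h (x - y + y ^ 2) * h (x - y + (y + z) ^ 2)) := by
        rw [sum_comm]
        refine sum_congr rfl fun y _ ↦ ?_
        rw [← Equiv.sum_comp (Equiv.subRight y)]
        refine sum_congr rfl fun x _ ↦ sum_congr rfl fun z _ ↦ ?_
        simp only [Equiv.subRight_apply, ← add_assoc, sub_add_cancel]
        ring
    _ = _ := by
        simp_rw [Fintype.sum_prod_type, mul_sum]
        rw [← sum_comm_cycle]

lemma progressionForm_indicator [DecidableEq R] (A B C : Finset R) :
    progressionForm (fun x ↦ if x ∈ A then 1 else 0) (fun x ↦ if x ∈ B then 1 else 0)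
      (fun x ↦ if x ∈ C then 1 else 0) =
        #{xy : R × R | xy.1 ∈ A ∧ xy.1 + xy.2 ∈ B ∧ xy.1 + xy.2 ^ 2 ∈ C} := by
  simp_rw [progressionForm, ← Fintype.sum_prod_type', card_filter, Nat.cast_sum, Nat.cast_ite,
    Nat.cast_one, Nat.cast_zero, ite_zero_mul_ite_zero, mul_one, and_assoc]

variable {F : Type*} [Field F] [Fintype F]

lemma progressionForm_pow_four_le (hF : ringChar F ≠ 2) (f g : F → ℝ) {h : F → ℝ}
    (hh : ∑ x, h x = 0) :
    progressionForm f g h ^ 4 ≤ 12 * Fintype.card F *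
      ((∑ x, f x ^ 2) ^ 2 * (∑ x, g x ^ 2) ^ 2 * (∑ x, h x ^ 2) ^ 2) := by
  have hf : progressionForm f g h ^ 2 ≤
      (∑ x, f x ^ 2) * ∑ x, (∑ y, g (x + y) * h (x + y ^ 2)) ^ 2 := by
    simp only [progressionForm, mul_assoc, ← mul_sum]
    exact sum_mul_sq_le_sq_mul_sq _ _ _
  have hg : (∑ x, (∑ y, g (x + y) * h (x + y ^ 2)) ^ 2) ^ 2 ≤
      (∑ x, g x ^ 2) ^ 2 * (12 * Fintype.card F * (∑ x, h x ^ 2) ^ 2) := by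
    rw [sum_sq_sum_progression_eq, ← sum_sq_mul_shift]
    refine (sum_mul_sq_le_sq_mul_sq _ _ _).trans ?_
    gcongr
    rw [Fintype.sum_prod_type]
    exact sum_sum_sq_sum_mul_le hF hh
  calc progressionForm f g h ^ 4 = (progressionForm f g h ^ 2) ^ 2 := by ring
    _ ≤ (∑ x, f x ^ 2) ^ 2 * (∑ x, (∑ y, g (x + y) * h (x + y ^ 2)) ^ 2) ^ 2 := by
        rw [← mul_pow]
        gcongr
    _ ≤ (∑ x, f x ^ 2) ^ 2 *
          ((∑ x, g x ^ 2) ^ 2 * (12 * Fintype.card F * (∑ x, h x ^ 2) ^ 2)) := by gcongr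
    _ = _ := by ring

lemma progressionForm_sub_pow_four_le (hF : ringChar F ≠ 2) (f g h : F → ℝ) :
    (progressionForm f g h - (∑ x, f x) * (∑ x, g x) * (∑ x, h x) / Fintype.card F) ^ 4 ≤
      12 * Fintype.card F * ((∑ x, f x ^ 2) ^ 2 * (∑ x, g x ^ 2) ^ 2 * (∑ x, h x ^ 2) ^ 2) := by
  set γ : ℝ := (∑ x, h x) / Fintype.card F with hγ
  have hγsum : Fintype.card F * γ = ∑ x, h x := mul_div_cancel₀ _ (by simp)
  have hmean : ∑ x, (h x - γ) = 0 := by simp [hγsum]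
  have hvar : ∑ x, (h x - γ) ^ 2 ≤ ∑ x, h x ^ 2 :=
    calc ∑ x, (h x - γ) ^ 2 = ∑ x, h x ^ 2 - Fintype.card F * γ ^ 2 := by
          simp only [sub_sq, sum_add_distrib, sum_sub_distrib, ← sum_mul, ← mul_sum, sum_const,
            card_univ, nsmul_eq_mul, ← hγsum]
          ring
      _ ≤ ∑ x, h x ^ 2 := sub_le_self _ (by positivity)
  rw [mul_div_assoc, ← hγ, ← progressionForm_sub_const]
  refine (progressionForm_pow_four_le hF f g hmean).trans ?_
  gcongr

end ProgressionForm

theorem stmt2_general {F : Type*} [Field F] [Fintype F] [DecidableEq F] (hF : ringChar F ≠ 2)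
    (A B C : Finset F) :
    |#{xy : F × F | xy.1 ∈ A ∧ xy.1 + xy.2 ∈ B ∧ xy.1 + xy.2 ^ 2 ∈ C} -
        A.dens * B.dens * C.dens * (Fintype.card F : ℝ) ^ 2| ≤
      2 * (Fintype.card F : ℝ) ^ (-(1 / 4) : ℝ) * √(A.dens * B.dens * C.dens) *
        (Fintype.card F : ℝ) ^ 2 := by
  have hq : (0 : ℝ) < Fintype.card F := by positivity
  have hroot : ((Fintype.card F : ℝ) ^ (-(1 / 4) : ℝ)) ^ 4 = (Fintype.card F : ℝ)⁻¹ := by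
    rw [← Real.rpow_mul_natCast hq.le, ← Real.rpow_neg_one]
    norm_num
  have hsqrt : √(A.dens * B.dens * C.dens : ℝ) ^ 4 = (A.dens * B.dens * C.dens) ^ 2 := by
    rw [pow_mul √_ 2 2, Real.sq_sqrt (by positivity)]
  have herr := progressionForm_sub_pow_four_le hF (fun x ↦ if x ∈ A then 1 else 0)
    (fun x ↦ if x ∈ B then 1 else 0) (fun x ↦ if x ∈ C then 1 else 0)
  rw [progressionForm_indicator] at herr
  simp only [ite_pow, one_pow, ne_eq, OfNat.ofNat_ne_zero, not_false_eq_true, zero_pow,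
    sum_boole, filter_mem_eq_inter, univ_inter] at herr
  rw [← pow_le_pow_iff_left₀ (abs_nonneg _) (by positivity) four_ne_zero,
    Even.pow_abs (by decide), mul_pow, mul_pow, mul_pow, hroot, hsqrt]
  simp only [nnratCast_dens]
  calc _ = (#{xy : F × F | xy.1 ∈ A ∧ xy.1 + xy.2 ∈ B ∧ xy.1 + xy.2 ^ 2 ∈ C} -
        (#A * #B * #C / Fintype.card F : ℝ)) ^ 4 := by
        field_simp
    _ ≤ 16 * Fintype.card F * ((#A : ℝ) ^ 2 * #B ^ 2 * #C ^ 2) := by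
        refine herr.trans ?_
        gcongr
        norm_num
    _ = _ := by
        field_simp
        ring

lemma sub_mul_sq_card_le_card_progressions {F : Type*} [Field F] [Fintype F] [DecidableEq F]
    (hF : ringChar F ≠ 2) (A : Finset F) {s : ℝ} (hs : s ≤ 1 / 4) :
    ((A.dens : ℝ) ^ 3 - 2 * (Fintype.card F : ℝ) ^ (-s) * (A.dens : ℝ) ^ ((3 : ℝ) / 2)) *
        (Fintype.card F : ℝ) ^ 2 ≤
      #{xy : F × F | xy.1 ∈ A ∧ xy.1 + xy.2 ∈ A ∧ xy.1 + xy.2 ^ 2 ∈ A} := by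
  have hsqrt : √((A.dens : ℝ) ^ 3) = (A.dens : ℝ) ^ ((3 : ℝ) / 2) := by
    rw [Real.sqrt_eq_rpow, ← Real.rpow_natCast_mul (by positivity)]
    norm_num
  have hrpow : (Fintype.card F : ℝ) ^ (-(1 / 4) : ℝ) ≤ (Fintype.card F : ℝ) ^ (-s) :=
    Real.rpow_le_rpow_of_exponent_le (mod_cast Fintype.card_pos) (neg_le_neg hs)
  rw [← hsqrt, pow_three', sub_mul]
  refine le_trans ?_ (sub_le_of_abs_sub_le_left (stmt2_general hF A A A))
  gcongr

theorem stmt2 : ∃ c : ℝ, 0 < c ∧ ∀ (p : ℕ) [NeZero p], p.Prime → p ≠ 2 →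
    ∀ A : Finset (ZMod p),
    (((Finset.univ.filter (fun xy : ZMod p × ZMod p =>
        xy.1 ∈ A ∧ xy.1 + xy.2 ∈ A ∧ xy.1 + xy.2 ^ 2 ∈ A)).card : ℝ)) ≥
      (((A.card : ℝ) / p) ^ 3 -
        c * (p : ℝ) ^ (-(1 / 10 : ℝ)) * ((A.card : ℝ) / p) ^ ((3 : ℝ) / 2)) * (p : ℝ) ^ 2 := by
  refine ⟨2, two_pos, fun p _ hp hp2 A ↦ ?_⟩
  have := Fact.mk hp
  simpa [nnratCast_dens, ZMod.card] using sub_mul_sq_card_le_card_progressions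
    (by rwa [ZMod.ringChar_zmod_n]) A (by norm_num : (1 / 10 : ℝ) ≤ 1 / 4)
end
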